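/- Let $f$ be holomorphic on the open unit disc and suppose that for almost every $w$ on the unit circle (with respect to arclength measure), the radial image $\{f(rw) : 0 \le r < 1\}$ is unbounded. Then for every $\zeta \in \mathbb{T}$ and every $r > 0$, the complement $\mathbb{C} \setminus f(D_{\zeta,r})$ of the image of the region $D_{\zeta,r} = \{z \in \mathbb{D} : |z - \zeta| < r\}$ is a polar subset of $\mathbb{C}$. -/

import Mathlib

/-!
Why the theorem holds. Put `Ω = f(D_{ζ,r})` and suppose that `E = Ωᶜ` is not polar. Potential theory
then yields a function that behaves like `exp (-h)`, with `h` the majorant of `log |z|` in Myrberg's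
theorem; composed with `f` it has lower boundary limits zero on an arc, which a uniqueness theorem
of Fatou–Privalov type forbids. Potentials and positive harmonic functions are replaced throughout
by polynomials and bounded holomorphic functions.

*Polarity.* As `f` is not constant, `Ω` contains a disc around some `z₀`. If for every bounded piece
of `E` there are monic polynomials with roots in the piece whose normalized sup norm on it is
arbitrarily small, then a product of suitably weighted powers of the moduli of such polynomials
vanishes on `E` but not at `z₀`, and its logarithm is a subharmonic function showing that `E` is
polar (`isPolar_of_product`, `isPolar_of_chebyshev_zero`).

*Myrberg's function.* Otherwise some compact `K ⊆ E` has positive Chebyshev constant. The monic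
polynomials with roots at Fekete points of `K` satisfy a lower bound off `K` that, after
normalization, is asymptotically independent of the degree (`exists_fekete`). For holomorphic `g` on
a convex domain avoiding `K`, the normalized roots of the reciprocals of these polynomials, composed
with `g`, form a normal family, and a limit `G` is bounded, nowhere zero, and at most `1 / (|g| -
M)` where `|g| > M` (`exists_bounded_of_avoids`).

*Boundary behaviour.* With `g s = f (ζ e^{-s})` on a small right half disc, `G` takes arbitrarily
small values near the end of the horizontal ray to almost every point of the diameter
(`ae_real_of_ae_circle`, `exists_large_near_circle`). A primitive `H` of `G` is Lipschitz, so it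
extends to the diameter and is differentiable almost everywhere there. At such points a maximum
principle on squares (`norm_pow_four_le`) identifies the limit of `G` with the boundary derivative
of `H` up to a factor `-i`, so this derivative vanishes. Hence `H` is constant on the diameter,
therefore constant near it, and `G` has a zero (`exists_zero_of_radial`): a contradiction.
-/

open MeasureTheory

/-- The Borel σ-algebra on the circle. -/
noncomputable instance : MeasurableSpace Circle := borel Circle

instance : BorelSpace Circle := ⟨rfl⟩

/-- `h` is harmonic on `s`: twice continuously differentiable with vanishing Laplacian. -/
def HarmonicOn (h : ℂ → ℝ) (s : Set ℂ) : Prop :=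
  ContDiffOn ℝ 2 h s ∧ ∀ z ∈ s,
    fderiv ℝ (fun w => fderiv ℝ h w 1) z 1
      + fderiv ℝ (fun w => fderiv ℝ h w Complex.I) z Complex.I = 0

/-- `u : ℂ → [-∞, ∞)` (encoded in `EReal`) is subharmonic on `s`: upper semicontinuous and
dominated on every closed disc in `s` by each harmonic majorant of its boundary values. -/
def SubharmonicOn (u : ℂ → EReal) (s : Set ℂ) : Prop :=
  UpperSemicontinuousOn u s ∧ (∀ z, u z < ⊤) ∧
  ∀ (c : ℂ) (r : ℝ), 0 < r → Metric.closedBall c r ⊆ s →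
    ∀ φ : ℂ → ℝ, ContinuousOn φ (Metric.closedBall c r) →
      HarmonicOn φ (Metric.ball c r) →
      (∀ z ∈ Metric.sphere c r, u z ≤ (φ z : EReal)) →
      ∀ z ∈ Metric.closedBall c r, u z ≤ (φ z : EReal)

/-- A set `P ⊆ ℂ` is polar if some subharmonic function on `ℂ`, not identically `-∞`,
equals `-∞` on all of `P`. -/
def IsPolar (P : Set ℂ) : Prop :=
  ∃ u : ℂ → EReal, SubharmonicOn u Set.univ ∧ (¬ ∀ z, u z = ⊥) ∧ ∀ z ∈ P, u z = ⊥

/-! ### Harmonic majorants and root moduli -/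

/-- Harmonicity as defined above implies harmonicity in Mathlib's sense. -/
lemma HarmonicOn.harmonicOnNhd {h : ℂ → ℝ} {s : Set ℂ} (hs : IsOpen s) (hh : HarmonicOn h s) :
    InnerProductSpace.HarmonicOnNhd h s := by
  have key : ∀ y ∈ s, Laplacian.laplacian h y = 0 := by
    intro y hy
    have hc : ContDiffAt ℝ 2 h y := (hh.1 y hy).contDiffAt (hs.mem_nhds hy)
    have hd : DifferentiableAt ℝ (fderiv ℝ h) y :=
      (hc.fderiv_right (m := 1) (by norm_num)).differentiableAt (by norm_num)
    have e : ∀ v : ℂ, fderiv ℝ (fun w => fderiv ℝ h w v) y v = fderiv ℝ (fderiv ℝ h) y v v := by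
      intro v
      rw [fderiv_clm_apply hd (differentiableAt_const v)]
      simp
    have := hh.2 y hy
    rw [e, e] at this
    rw [InnerProductSpace.laplacian_eq_iteratedFDeriv_complexPlane]
    simpa [iteratedFDeriv_two_apply] using this
  intro x hx
  refine ⟨(hh.1 x hx).contDiffAt (hs.mem_nhds hx), ?_⟩
  filter_upwards [hs.mem_nhds hx] with y hy using key y hy

/-- Maximum principle: if `log ‖P‖ ≤ Q φ` on a circle, with `P` entire and `φ` harmonic in the disc
and continuous on its closure, then the inequality persists in the disc. -/
lemma norm_le_exp_of_sphere {c : ℂ} {r : ℝ} (hr : 0 < r) {φ : ℂ → ℝ}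
    (hφc : ContinuousOn φ (Metric.closedBall c r)) (hφ : HarmonicOn φ (Metric.ball c r))
    {P : ℂ → ℂ} (hP : Differentiable ℂ P) (Q : ℝ)
    (hb : ∀ z ∈ Metric.sphere c r, ‖P z‖ ≤ Real.exp (Q * φ z)) :
    ∀ z ∈ Metric.closedBall c r, ‖P z‖ ≤ Real.exp (Q * φ z) := by
  obtain ⟨F, hF, hFre⟩ := (hφ.harmonicOnNhd Metric.isOpen_ball).exists_analyticOnNhd_ball_re_eq
  set N : ℂ → ℝ := fun z => ‖P z‖ * Real.exp (-(Q * φ z)) with hN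
  have hNc : ContinuousOn N (Metric.closedBall c r) := by
    have := hP.continuous
    fun_prop
  have hNP : ∀ z, N z ≤ 1 ↔ ‖P z‖ ≤ Real.exp (Q * φ z) := by
    intro z
    rw [hN]
    simp only
    rw [Real.exp_neg, ← div_eq_mul_inv, div_le_one (Real.exp_pos _)]
  have hNF : ∀ z ∈ Metric.ball c r, N z = ‖P z * Complex.exp (-(Q * F z))‖ := by
    intro z hz
    have := hFre hz
    simp only at this
    simp [hN, Complex.norm_exp, ← this]
  obtain ⟨x, hx, hmax⟩ := (isCompact_closedBall c r).exists_isMaxOn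
    (Metric.nonempty_closedBall.2 hr.le) hNc
  suffices hx1 : N x ≤ 1 from fun z hz => (hNP z).1 ((hmax hz).trans hx1)
  by_cases hxs : x ∈ Metric.sphere c r
  · exact (hNP x).2 (hb x hxs)
  have hxb : x ∈ Metric.ball c r :=
    lt_of_le_of_ne (Metric.mem_closedBall.1 hx) (fun h => hxs h)
  have hd : DifferentiableOn ℂ (fun z => P z * Complex.exp (-(Q * F z))) (Metric.ball c r) := by
    have := hF.differentiableOn
    have := hP.differentiableOn (s := Metric.ball c r)
    fun_prop
  have hmax' : IsMaxOn (norm ∘ fun z => P z * Complex.exp (-(Q * F z))) (Metric.ball c r) x := by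
    intro z hz
    simp only [Set.mem_ofPred_eq, Function.comp, ← hNF z hz, ← hNF x hxb]
    exact hmax (Metric.ball_subset_closedBall hz)
  have heq := Complex.norm_eqOn_of_isPreconnected_of_isMaxOn
    (convex_ball c r).isPreconnected Metric.isOpen_ball hd hxb hmax'
  have heqN : Set.EqOn N (fun _ => N x) (Metric.ball c r) := by
    intro z hz
    have := heq hz
    simp only [Function.comp, Function.const] at this
    rw [hNF z hz, this, hNF x hxb]
  have heqC : Set.EqOn N (fun _ => N x) (Metric.closedBall c r) := by
    refine heqN.of_subset_closure hNc continuousOn_const Metric.ball_subset_closedBall ?_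
    rw [closure_ball c hr.ne']
  have hp : c + r ∈ Metric.sphere c r := by simp [abs_of_pos hr]
  exact (heqC (Metric.sphere_subset_closedBall hp)).ge.trans ((hNP _).2 (hb _ hp))

/-- `N` is a positive-integer root of the modulus of an entire function: `N = ‖P‖ ^ (1 / q)`.
Such `N` have a subharmonic logarithm, and form a multiplicative class closed under roots. -/
def IsRootModulus (N : ℂ → ℝ) : Prop :=
  ∃ (P : ℂ → ℂ) (q : ℕ), Differentiable ℂ P ∧ 0 < q ∧ ∀ z, 0 ≤ N z ∧ N z ^ q = ‖P z‖

lemma IsRootModulus.continuous {N : ℂ → ℝ} (h : IsRootModulus N) : Continuous N := by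
  obtain ⟨P, q, hP, hq, h⟩ := h
  have e : N = fun z => ‖P z‖ ^ ((q : ℝ)⁻¹) := by
    ext z
    rw [← (h z).2, Real.pow_rpow_inv_natCast (h z).1 hq.ne']
  rw [e]
  exact hP.continuous.norm.rpow_const fun _ => Or.inr (by positivity)

lemma IsRootModulus.const {a : ℝ} (ha : 0 ≤ a) : IsRootModulus fun _ => a :=
  ⟨fun _ => a, 1, differentiable_const _, one_pos, fun _ => ⟨ha, by simp [abs_of_nonneg ha]⟩⟩

lemma IsRootModulus.mul {N₁ N₂ : ℂ → ℝ} (h₁ : IsRootModulus N₁) (h₂ : IsRootModulus N₂) :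
    IsRootModulus fun z => N₁ z * N₂ z := by
  obtain ⟨P, p, hP, hp, h₁⟩ := h₁
  obtain ⟨Q, q, hQ, hq, h₂⟩ := h₂
  refine ⟨fun z => P z ^ q * Q z ^ p, p * q, by fun_prop, by positivity, fun z =>
    ⟨mul_nonneg (h₁ z).1 (h₂ z).1, ?_⟩⟩
  rw [norm_mul, norm_pow, norm_pow, ← (h₁ z).2, ← (h₂ z).2, mul_pow]
  ring

lemma IsRootModulus.prod {N : ℕ → ℂ → ℝ} (h : ∀ k, IsRootModulus (N k)) (m : ℕ) :
    IsRootModulus fun z => ∏ k ∈ Finset.range m, N k z := by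
  induction m with
  | zero => simpa using IsRootModulus.const zero_le_one
  | succ m ih => simpa [Finset.prod_range_succ] using ih.mul (h m)

/-- Subharmonicity of `log N - b`, in the form required by `SubharmonicOn`. -/
lemma IsRootModulus.le_exp_of_sphere {N : ℂ → ℝ} (h : IsRootModulus N) {c : ℂ} {r : ℝ}
    (hr : 0 < r) {φ : ℂ → ℝ} (hφc : ContinuousOn φ (Metric.closedBall c r))
    (hφ : HarmonicOn φ (Metric.ball c r)) (b : ℝ)
    (hb : ∀ z ∈ Metric.sphere c r, N z ≤ Real.exp (φ z + b)) :
    ∀ z ∈ Metric.closedBall c r, N z ≤ Real.exp (φ z + b) := by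
  obtain ⟨P, q, hP, hq, h⟩ := h
  -- the constant `b` is absorbed into the entire function
  have key : ∀ z, ‖P z * Complex.exp (-(q * b))‖ ≤ Real.exp (q * φ z) ↔
      N z ≤ Real.exp (φ z + b) := by
    intro z
    have e : ‖Complex.exp (-(q * b))‖ = (Real.exp (q * b))⁻¹ := by
      simp [Complex.norm_exp, Real.exp_neg]
    rw [norm_mul, e, ← div_eq_mul_inv, div_le_iff₀ (Real.exp_pos _), ← Real.exp_add, ← mul_add,
      Real.exp_nat_mul, ← (h z).2]
    exact pow_le_pow_iff_left₀ (h z).1 (Real.exp_pos _).le hq.ne'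
  intro z hz
  rw [← key]
  refine norm_le_exp_of_sphere hr hφc hφ (P := fun z => P z * Complex.exp (-(q * b)))
    (by fun_prop) q (fun w hw => (key w).2 (hb w hw)) z hz

/-- The shape in which polarity is established: an infinite product of root moduli that are
eventually at most `1` on every disc, whose value at `z₀` stays positive, and which diverges to `0`
at every point of `E`. The logarithm of the product is the required subharmonic function. -/
lemma isPolar_of_product {E : Set ℂ} (z₀ : ℂ) (v : ℕ → ℂ → ℝ) (hv : ∀ k, IsRootModulus (v k))
    (hv1 : ∀ (k : ℕ) z, ‖z‖ ≤ k → v k z ≤ 1)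
    (hz₀ : ∀ k, Real.exp (-(1 / 2) ^ k) ≤ v k z₀)
    (hE : ∀ z ∈ E, ∀ᶠ k in Filter.atTop, v k z ≤ Real.exp (-1)) : IsPolar E := by
  have hv0 : ∀ k z, 0 ≤ v k z := fun k z => by
    obtain ⟨P, q, hP, hq, h⟩ := hv k
    exact (h z).1
  set V : ℕ → ℂ → ℝ := fun m z => ∏ k ∈ Finset.range m, v k z with hV
  have hVr : ∀ m, IsRootModulus (V m) := IsRootModulus.prod hv
  have hV0 : ∀ m z, 0 ≤ V m z := fun m z => Finset.prod_nonneg fun k _ => hv0 k z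
  have hanti : ∀ (M : ℕ) z, ‖z‖ ≤ M → Antitone fun m => V (m + M) z := by
    intro M z hz
    refine antitone_nat_of_succ_le fun m => ?_
    have e : m + 1 + M = (m + M) + 1 := by ring
    simp only [e, hV, Finset.prod_range_succ]
    refine mul_le_of_le_one_right (hV0 _ _) (hv1 _ _ (hz.trans ?_))
    push_cast
    linarith [(Nat.cast_nonneg m : (0 : ℝ) ≤ m)]
  have hlim : ∀ z, ∃ l, Filter.Tendsto (fun m => V m z) Filter.atTop (nhds l) := by
    intro z
    obtain ⟨M, hM⟩ := exists_nat_ge ‖z‖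
    refine ⟨⨅ m, V (m + M) z, (Filter.tendsto_add_atTop_iff_nat M).1 ?_⟩
    exact tendsto_atTop_ciInf (hanti M z hM) ⟨0, by rintro _ ⟨m, rfl⟩; exact hV0 _ _⟩
  choose U hU using hlim
  have hU0 : ∀ z, 0 ≤ U z := fun z => ge_of_tendsto' (hU z) fun m => hV0 m z
  have hUV : ∀ (M m : ℕ) z, ‖z‖ ≤ M → U z ≤ V (m + M) z := fun M m z hz =>
    (hanti M z hz).le_of_tendsto ((Filter.tendsto_add_atTop_iff_nat M).2 (hU z)) m
  have hUlt : ∀ (M : ℕ) z y, U z < y → ∃ m, V (m + M) z < y := fun M z y hy =>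
    (((Filter.tendsto_add_atTop_iff_nat M).2 (hU z)).eventually_lt_const hy).exists
  have husc : UpperSemicontinuous U := by
    intro z y hy
    obtain ⟨M, hM⟩ := exists_nat_ge (‖z‖ + 1)
    obtain ⟨m, hm⟩ := hUlt M z y hy
    filter_upwards [(hVr (m + M)).continuous.continuousAt.eventually_lt_const hm,
      Metric.ball_mem_nhds z one_pos] with w hw hw1
    refine (hUV M m w ?_).trans_lt hw
    have := norm_sub_norm_le w z
    rw [Metric.mem_ball, dist_eq_norm] at hw1
    linarith
  have hexp : ∀ z (t : ℝ), ENNReal.log (ENNReal.ofReal (U z)) ≤ (t : EReal) ↔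
      U z ≤ Real.exp t := by
    intro z t
    rw [← EReal.log_exp (t : EReal), ENNReal.log_le_log_iff, EReal.exp_coe]
    exact ENNReal.ofReal_le_ofReal_iff (Real.exp_pos _).le
  refine ⟨fun z => ENNReal.log (ENNReal.ofReal (U z)), ⟨?_, ?_, ?_⟩, ?_, ?_⟩
  · rw [upperSemicontinuousOn_univ_iff]
    have h1 : Monotone fun x : ℝ => ENNReal.log (ENNReal.ofReal x) := fun x y hxy =>
      ENNReal.log_monotone (ENNReal.ofReal_le_ofReal hxy)
    have h2 : Continuous fun x : ℝ => ENNReal.log (ENNReal.ofReal x) :=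
      ENNReal.continuous_log.comp ENNReal.continuous_ofReal
    exact h2.comp_upperSemicontinuous husc h1
  · intro z
    rw [lt_top_iff_ne_top, ne_eq, ENNReal.log_eq_top_iff]
    exact ENNReal.ofReal_ne_top
  · intro c r hr _ φ hφc hφ hb z hz
    rw [hexp]
    refine le_of_forall_gt_imp_ge_of_dense fun y hy => ?_
    have hy0 : 0 < y := (Real.exp_pos _).trans hy
    set b : ℝ := Real.log y - φ z with hbdef
    have hb0 : 0 < b := by
      have := (Real.lt_log_iff_exp_lt hy0).2 hy
      linarith
    have hy' : Real.exp (φ z + b) = y := by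
      rw [hbdef, add_sub_cancel, Real.exp_log hy0]
    obtain ⟨M, hM⟩ := exists_nat_ge (‖c‖ + r)
    have hball : ∀ w ∈ Metric.closedBall c r, ‖w‖ ≤ M := by
      intro w hw
      rw [Metric.mem_closedBall, dist_eq_norm] at hw
      have := norm_sub_norm_le w c
      linarith
    -- Dini: by compactness one partial product lies below the majorant on the whole circle
    have hdini : ∃ m, ∀ w ∈ Metric.sphere c r, V (m + M) w ≤ Real.exp (φ w + b) := by
      have hloc : ∀ w ∈ Metric.sphere c r, ∃ t ∈ nhdsWithin w (Metric.sphere c r), ∃ m,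
          ∀ x ∈ t, V (m + M) x ≤ Real.exp (φ x + b) := by
        intro w hw
        have h1 : U w < Real.exp (φ w + b) :=
          ((hexp w _).1 (hb w hw)).trans_lt (Real.exp_lt_exp.2 (by linarith))
        obtain ⟨m, hm⟩ := hUlt M w _ h1
        have hc1 : ContinuousWithinAt (fun x => Real.exp (φ x + b)) (Metric.sphere c r) w := by
          have : ContinuousWithinAt φ (Metric.sphere c r) w :=
            (hφc.mono Metric.sphere_subset_closedBall) w hw
          exact Real.continuous_exp.continuousAt.comp_continuousWithinAt (this.add_const b)
        have hc2 : ContinuousWithinAt (V (m + M)) (Metric.sphere c r) w :=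
          (hVr _).continuous.continuousWithinAt
        exact ⟨_, hc2.eventually_lt hc1 hm, m, fun x hx => le_of_lt hx⟩
      refine (isCompact_sphere c r).induction_on
        (p := fun s => ∃ m, ∀ w ∈ s ∩ Metric.sphere c r, V (m + M) w ≤ Real.exp (φ w + b))
        ⟨0, by simp⟩ ?_ ?_ ?_ |>.imp fun m hm w hw => hm w ⟨hw, hw⟩
      · rintro s t hst ⟨m, hm⟩
        exact ⟨m, fun w hw => hm w ⟨hst hw.1, hw.2⟩⟩
      · rintro s t ⟨m, hm⟩ ⟨n, hn⟩
        refine ⟨max m n, ?_⟩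
        rintro w ⟨hw | hw, hws⟩
        · exact (hanti M w (hball w (Metric.sphere_subset_closedBall hws)) (le_max_left m n)).trans
            (hm w ⟨hw, hws⟩)
        · exact (hanti M w (hball w (Metric.sphere_subset_closedBall hws)) (le_max_right m n)).trans
            (hn w ⟨hw, hws⟩)
      · intro w hw
        obtain ⟨t, ht, m, hm⟩ := hloc w hw
        exact ⟨t, ht, m, fun x hx => hm x hx.1⟩
    obtain ⟨m, hm⟩ := hdini
    exact (hUV M m z (hball z hz)).trans
      (((hVr _).le_exp_of_sphere hr hφc hφ b hm z hz).trans hy'.le)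
  · intro h
    have h1 := h z₀
    rw [ENNReal.log_eq_bot_iff, ENNReal.ofReal_eq_zero] at h1
    -- `∑ (1/2)^k = 2`
    have h2 : ∀ m, Real.exp (-2) ≤ V m z₀ := by
      intro m
      calc Real.exp (-2) ≤ Real.exp (∑ k ∈ Finset.range m, -((1 / 2 : ℝ) ^ k)) := by
            refine Real.exp_le_exp.2 ?_
            rw [Finset.sum_neg_distrib, neg_le_neg_iff]
            exact sum_geometric_two_le m
        _ = ∏ k ∈ Finset.range m, Real.exp (-((1 / 2 : ℝ) ^ k)) := Real.exp_sum _ _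
        _ ≤ V m z₀ := Finset.prod_le_prod (fun _ _ => (Real.exp_pos _).le) fun k _ => hz₀ k
    have h3 := ge_of_tendsto' (hU z₀) h2
    linarith [Real.exp_pos (-2)]
  · intro z hz
    rw [ENNReal.log_eq_bot_iff, ENNReal.ofReal_eq_zero]
    obtain ⟨M, hM⟩ := Filter.eventually_atTop.1 (hE z hz)
    have hbd : ∀ m, V (m + M) z ≤ V M z * Real.exp (-1) ^ m := by
      intro m
      induction m with
      | zero => simp
      | succ m ih =>
        have e : m + 1 + M = (m + M) + 1 := by ring
        calc V (m + 1 + M) z = V (m + M) z * v (m + M) z := by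
              rw [e]; simp only [hV, Finset.prod_range_succ]
          _ ≤ (V M z * Real.exp (-1) ^ m) * Real.exp (-1) :=
              mul_le_mul ih (hM _ (by omega)) (hv0 _ _)
                (mul_nonneg (hV0 _ _) (pow_nonneg (Real.exp_pos _).le _))
          _ = _ := by ring
    have ht : Filter.Tendsto (fun m : ℕ => V M z * Real.exp (-1) ^ m) Filter.atTop (nhds 0) := by
      simpa using (tendsto_pow_atTop_nhds_zero_of_lt_one (Real.exp_pos (-1)).le
        (by simp)).const_mul (V M z)
    exact le_of_tendsto_of_tendsto' ((Filter.tendsto_add_atTop_iff_nat M).2 (hU z)) ht hbd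

/-! ### Chebyshev constants and Fekete points -/

/-- If `E` misses a disc around `z₀` and every bounded piece of `E` has Chebyshev constant `0`
(monic polynomials with roots in the piece have arbitrarily small normalized sup norm there), then
`E` is polar. -/
lemma isPolar_of_chebyshev_zero {E : Set ℂ} {z₀ : ℂ} {δ : ℝ} (hδ : 0 < δ)
    (hE : ∀ z ∈ E, δ ≤ ‖z₀ - z‖)
    (hcap : ∀ k : ℕ, (E ∩ Metric.closedBall 0 k).Nonempty → ∀ c : ℝ, 0 < c →
      ∃ (n : ℕ) (a : Fin n → ℂ), (∀ i, a i ∈ E ∩ Metric.closedBall 0 k) ∧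
        ∀ z ∈ E ∩ Metric.closedBall 0 k, ∏ i, ‖z - a i‖ < c ^ n) : IsPolar E := by
  have step : ∀ k : ℕ, ∃ v : ℂ → ℝ, IsRootModulus v ∧ (∀ z, ‖z‖ ≤ k → v z ≤ 1) ∧
      Real.exp (-(1 / 2) ^ k) ≤ v z₀ ∧
      ∀ z ∈ E ∩ Metric.closedBall 0 k, v z ≤ Real.exp (-1) := by
    intro k
    by_cases hne : (E ∩ Metric.closedBall 0 (k : ℝ)).Nonempty
    swap
    · refine ⟨fun _ => 1, IsRootModulus.const zero_le_one, fun _ _ => le_rfl, ?_, ?_⟩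
      · exact Real.exp_le_one_iff.2 (by simp)
      · intro z hz
        exact absurd ⟨z, hz⟩ hne
    set B : ℝ := 2 * (k + 1) with hB
    have hB1 : 1 ≤ B := by
      have : (0 : ℝ) ≤ k := Nat.cast_nonneg k
      linarith
    have hB0 : 0 < B := by linarith
    -- `1 / W` is the weight of the polynomial; it keeps the value at `z₀` close to `1`
    obtain ⟨W, hW⟩ := exists_nat_ge (max 1 (2 ^ k * Real.log (B / δ)))
    have hW1 : (1 : ℝ) ≤ W := (le_max_left _ _).trans hW
    have hW2 : 2 ^ k * Real.log (B / δ) ≤ W := (le_max_right _ _).trans hW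
    have hW0 : W ≠ 0 := by
      rintro rfl
      norm_num at hW1
    obtain ⟨n, a, ha, hsmall⟩ := hcap k hne (Real.exp (-W)) (Real.exp_pos _)
    have hn : n ≠ 0 := by
      rintro rfl
      obtain ⟨z, hz⟩ := hne
      simpa using hsmall z hz
    have hq : W * n ≠ 0 := mul_ne_zero hW0 hn
    set P : ℂ → ℂ := fun z => (∏ i, (z - a i)) / (B : ℂ) ^ n with hP
    have hPn : ∀ z, ‖P z‖ = (∏ i, ‖z - a i‖) / B ^ n := by
      intro z
      simp [hP, abs_of_pos hB0]
    have hroot : ∀ z (t : ℝ), 0 ≤ t → (‖P z‖ ^ (((W * n : ℕ) : ℝ)⁻¹) ≤ t ↔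
        ‖P z‖ ≤ t ^ (W * n)) := by
      intro z t ht
      rw [← pow_le_pow_iff_left₀ (Real.rpow_nonneg (norm_nonneg _) _) ht hq,
        Real.rpow_inv_natCast_pow (norm_nonneg _) hq]
    refine ⟨fun z => ‖P z‖ ^ (((W * n : ℕ) : ℝ)⁻¹), ⟨P, W * n, ?_, Nat.pos_of_ne_zero hq, ?_⟩,
      ?_, ?_, ?_⟩
    · simp only [hP]
      fun_prop
    · intro z
      exact ⟨Real.rpow_nonneg (norm_nonneg _) _, Real.rpow_inv_natCast_pow (norm_nonneg _) hq⟩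
    · intro z hz
      rw [hroot z 1 zero_le_one, one_pow, hPn, div_le_one (by positivity)]
      calc ∏ i, ‖z - a i‖ ≤ ∏ i : Fin n, B := by
            refine Finset.prod_le_prod (fun _ _ => norm_nonneg _) fun i _ => ?_
            have h1 : ‖a i‖ ≤ k := by simpa using (ha i).2
            have h2 := norm_sub_le z (a i)
            linarith
        _ = B ^ n := by simp
    · have h1 : Real.exp (-(1 / 2) ^ k) ^ W ≤ δ / B := by
        rw [← Real.exp_nat_mul, ← Real.le_log_iff_exp_le (by positivity)]
        have h3 : Real.log (δ / B) = -Real.log (B / δ) := by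
          rw [← Real.log_inv, inv_div]
        have h4 : Real.log (B / δ) ≤ W * (1 / 2) ^ k := by
          rw [one_div, inv_pow, ← div_eq_mul_inv, le_div_iff₀ (by positivity)]
          linarith
        rw [h3]
        linarith
      rw [← pow_le_pow_iff_left₀ (Real.exp_pos _).le (Real.rpow_nonneg (norm_nonneg _) _) hq,
        Real.rpow_inv_natCast_pow (norm_nonneg _) hq, pow_mul, hPn]
      calc (Real.exp (-(1 / 2) ^ k) ^ W) ^ n ≤ (δ / B) ^ n := by gcongr
        _ = (∏ i : Fin n, δ) / B ^ n := by simp [div_pow]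
        _ ≤ _ := by
          gcongr with i
          exact hE _ (ha i).1
    · intro z hz
      rw [hroot z _ (Real.exp_pos _).le, hPn]
      calc (∏ i, ‖z - a i‖) / B ^ n ≤ ∏ i, ‖z - a i‖ :=
            div_le_self (Finset.prod_nonneg fun _ _ => norm_nonneg _) (one_le_pow₀ hB1)
        _ ≤ Real.exp (-W) ^ n := (hsmall z hz).le
        _ = Real.exp (-1) ^ (W * n) := by
          rw [pow_mul, ← Real.exp_nat_mul (-1) W]
          simp
  choose v hv hv1 hv2 hv3 using step
  refine isPolar_of_product z₀ v hv hv1 hv2 fun z hz => ?_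
  filter_upwards [Filter.eventually_ge_atTop ⌈‖z‖⌉₊] with k hk
  exact hv3 k z ⟨hz, by simpa using (Nat.le_ceil ‖z‖).trans (Nat.cast_le.2 hk)⟩

/-- The product of all mutual distances of a finite family, with the factors involving the `j`-th
point collected. -/
lemma prod_dist_eq {n : ℕ} (b : Fin n → ℂ) (j : Fin n) :
    ∏ i, ∏ k ∈ Finset.univ.erase i, ‖b i - b k‖ =
      (∏ k ∈ Finset.univ.erase j, ‖b j - b k‖) ^ 2 *
        ∏ i ∈ Finset.univ.erase j, ∏ k ∈ (Finset.univ.erase i).erase j, ‖b i - b k‖ := by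
  rw [← Finset.mul_prod_erase _ _ (Finset.mem_univ j), pow_two, mul_assoc]
  congr 1
  have h : ∀ i ∈ Finset.univ.erase j, ∏ k ∈ Finset.univ.erase i, ‖b i - b k‖ =
      ‖b j - b i‖ * ∏ k ∈ (Finset.univ.erase i).erase j, ‖b i - b k‖ := by
    intro i hi
    rw [← Finset.mul_prod_erase (Finset.univ.erase i) _
      (Finset.mem_erase.2 ⟨(Finset.ne_of_mem_erase hi).symm, Finset.mem_univ j⟩), norm_sub_rev]
  rw [Finset.prod_congr rfl h, Finset.prod_mul_distrib]

/-- Fekete points. Let `K` be compact with Chebyshev constant at least `c > 0`. For points of `K`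
with maximal product of mutual distances, the Lagrange basis polynomials sum to `1` while their
denominators are at least `c ^ n`; hence the monic polynomial `p` with these roots has
`log |p| / (n + 1)` asymptotically bounded below by `log c` off `K`. -/
lemma exists_fekete {K : Set ℂ} (hK : IsCompact K) {c : ℝ} (hc : 0 < c)
    (hcap : ∀ (n : ℕ) (a : Fin n → ℂ), (∀ i, a i ∈ K) → ∃ z ∈ K, c ^ n ≤ ∏ i, ‖z - a i‖)
    (n : ℕ) : ∃ a : Fin (n + 1) → ℂ, (∀ i, a i ∈ K) ∧
      ∀ z, Metric.infDist z K * c ^ n ≤ (n + 1) * ∏ i, ‖z - a i‖ := by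
  have hinf : K.Infinite := by
    intro hfin
    let e := hfin.toFinset.equivFin
    obtain ⟨z, hz, h⟩ := hcap _ (fun i => (e.symm i : ℂ))
      fun i => hfin.mem_toFinset.1 (e.symm i).2
    have h0 : ∏ i, ‖z - (e.symm i : ℂ)‖ = 0 :=
      Finset.prod_eq_zero (Finset.mem_univ (e ⟨z, hfin.mem_toFinset.2 hz⟩)) (by simp)
    rw [h0] at h
    exact absurd h (not_le.2 (pow_pos hc _))
  set Φ : (Fin (n + 1) → ℂ) → ℝ := fun b => ∏ i, ∏ k ∈ Finset.univ.erase i, ‖b i - b k‖ with hΦ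
  have hΦc : Continuous Φ := by
    simp only [hΦ]
    fun_prop
  have hcomp : IsCompact (Set.univ.pi fun _ : Fin (n + 1) => K) := isCompact_univ_pi fun _ => hK
  obtain ⟨x₀, hx₀⟩ := hinf.nonempty
  obtain ⟨a, ha, hmax⟩ := hcomp.exists_isMaxOn ⟨fun _ => x₀, fun _ _ => hx₀⟩ hΦc.continuousOn
  have haK : ∀ i, a i ∈ K := fun i => ha i (Set.mem_univ i)
  have hpos : 0 < Φ a := by
    let g := hinf.natEmbedding
    refine lt_of_lt_of_le ?_ (hmax (a := fun i : Fin (n + 1) => (g i : ℂ))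
      fun i _ => (g i).2)
    refine Finset.prod_pos fun i _ => Finset.prod_pos fun k hk => norm_pos_iff.2 ?_
    rw [sub_ne_zero]
    intro h
    have h1 := g.injective (Subtype.ext h)
    exact Finset.ne_of_mem_erase hk (Fin.ext h1.symm)
  set D : Fin (n + 1) → ℂ → ℝ := fun j w => ∏ k ∈ Finset.univ.erase j, ‖w - a k‖ with hD
  have hD0 : ∀ j w, 0 ≤ D j w := fun j w => Finset.prod_nonneg fun _ _ => norm_nonneg _
  have hDle : ∀ j, ∀ w ∈ K, D j w ≤ D j (a j) := by
    intro j w hw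
    have h1 : Φ (Function.update a j w) ≤ Φ a := by
      refine hmax fun i _ => ?_
      by_cases hij : i = j
      · subst hij; simpa using hw
      · simpa [hij] using haK i
    set Ψ : ℝ := ∏ i ∈ Finset.univ.erase j, ∏ k ∈ (Finset.univ.erase i).erase j, ‖a i - a k‖
    have e1 : Φ a = D j (a j) ^ 2 * Ψ := prod_dist_eq a j
    have e2 : Φ (Function.update a j w) = D j w ^ 2 * Ψ := by
      rw [hΦ]
      simp only
      rw [prod_dist_eq _ j]
      congr 1
      · congr 1
        refine Finset.prod_congr rfl fun k hk => ?_
        simp [Finset.ne_of_mem_erase hk]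
      · refine Finset.prod_congr rfl fun i hi => Finset.prod_congr rfl fun k hk => ?_
        simp [Finset.ne_of_mem_erase hi, Finset.ne_of_mem_erase hk]
    have hΨ : 0 < Ψ := by
      rw [e1] at hpos
      exact pos_of_mul_pos_right hpos (sq_nonneg _)
    rw [e1, e2] at h1
    exact (pow_le_pow_iff_left₀ (hD0 _ _) (hD0 _ _) two_ne_zero).1 (le_of_mul_le_mul_right h1 hΨ)
  have hDc : ∀ j, c ^ n ≤ D j (a j) := by
    intro j
    obtain ⟨w, hw, h⟩ := hcap n (fun i => a (j.succAbove i)) fun i => haK _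
    refine h.trans (le_trans (le_of_eq ?_) (hDle j w hw))
    rw [hD]
    simp only
    rw [← Finset.compl_singleton, ← Fin.image_succAbove_univ,
      Finset.prod_image fun _ _ _ _ h => Fin.succAbove_right_injective h]
  have hinj : Function.Injective a := by
    intro i k hik
    by_contra hne
    have h0 : D i (a i) = 0 :=
      Finset.prod_eq_zero (Finset.mem_erase.2 ⟨Ne.symm hne, Finset.mem_univ k⟩) (by simp [hik])
    have := hDc i
    rw [h0] at this
    exact absurd this (not_le.2 (pow_pos hc _))
  refine ⟨a, haK, fun z => ?_⟩
  have hlag : (1 : ℝ) ≤ ∑ j, D j z / c ^ n := by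
    have h1 := congrArg (Polynomial.eval z)
      (Lagrange.sum_basis (s := Finset.univ) (v := a) hinj.injOn Finset.univ_nonempty)
    rw [Polynomial.eval_finsetSum, Polynomial.eval_one] at h1
    have h2 : ∀ j, ‖Polynomial.eval z (Lagrange.basis Finset.univ a j)‖ ≤ D j z / c ^ n := by
      intro j
      have e : ‖Polynomial.eval z (Lagrange.basis Finset.univ a j)‖ = D j z / D j (a j) := by
        simp only [Lagrange.basis, Polynomial.eval_prod, norm_prod, Lagrange.basisDivisor, hD]
        rw [← Finset.prod_div_distrib]
        refine Finset.prod_congr rfl fun k _ => ?_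
        simp [div_eq_inv_mul]
      rw [e]
      exact div_le_div_of_nonneg_left (hD0 _ _) (pow_pos hc _) (hDc j)
    calc (1 : ℝ) = ‖∑ j, Polynomial.eval z (Lagrange.basis Finset.univ a j)‖ := by
          rw [h1, norm_one]
      _ ≤ ∑ j, ‖Polynomial.eval z (Lagrange.basis Finset.univ a j)‖ := norm_sum_le _ _
      _ ≤ _ := Finset.sum_le_sum fun j _ => h2 j
  have hterm : ∀ j, Metric.infDist z K * D j z ≤ ∏ i, ‖z - a i‖ := by
    intro j
    rw [← Finset.mul_prod_erase _ _ (Finset.mem_univ j)]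
    refine mul_le_mul_of_nonneg_right ?_ (hD0 _ _)
    rw [← dist_eq_norm]
    exact Metric.infDist_le_dist_of_mem (haK j)
  rw [← Finset.sum_div, le_div_iff₀ (pow_pos hc _), one_mul] at hlag
  calc Metric.infDist z K * c ^ n ≤ Metric.infDist z K * ∑ j, D j z :=
        mul_le_mul_of_nonneg_left hlag Metric.infDist_nonneg
    _ = ∑ j, Metric.infDist z K * D j z := Finset.mul_sum _ _ _
    _ ≤ ∑ _j : Fin (n + 1), ∏ i, ‖z - a i‖ := Finset.sum_le_sum fun j _ => hterm j
    _ = (n + 1) * ∏ i, ‖z - a i‖ := by simp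

/-! ### Montel's theorem along an ultrafilter, and holomorphic logarithms -/

/-- A bound on a disc gives a Lipschitz bound on the concentric disc of half the radius. -/
lemma norm_sub_le_of_ball_bound {F : ℂ → ℂ} {s : ℂ} {ρ C : ℝ} (hρ : 0 < ρ)
    (hd : DifferentiableOn ℂ F (Metric.ball s ρ)) (hC : ∀ w ∈ Metric.ball s ρ, ‖F w‖ ≤ C)
    {y z : ℂ} (hy : y ∈ Metric.ball s (ρ / 2)) (hz : z ∈ Metric.ball s (ρ / 2)) :
    ‖F y - F z‖ ≤ C / (ρ / 4) * ‖y - z‖ := by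
  have hsub : ∀ x ∈ Metric.ball s (ρ / 2), Metric.closedBall x (ρ / 4) ⊆ Metric.ball s ρ := by
    intro x hx
    apply Metric.closedBall_subset_ball'
    rw [Metric.mem_ball] at hx
    linarith
  have hdAt : ∀ x ∈ Metric.ball s (ρ / 2), DifferentiableAt ℂ F x := fun x hx =>
    hd.differentiableAt (Metric.isOpen_ball.mem_nhds
      (hsub x hx (Metric.mem_closedBall_self (by positivity))))
  refine (convex_ball s (ρ / 2)).norm_image_sub_le_of_norm_deriv_le (𝕜 := ℂ) hdAt ?_ hz hy
  intro x hx
  refine Complex.norm_deriv_le_of_forall_mem_sphere_norm_le (by positivity)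
    ((hd.mono (hsub x hx)).diffContOnCl_ball (le_refl _)) ?_
  exact fun z hz => hC z (hsub x hx (Metric.sphere_subset_closedBall hz))

/-- A locally bounded sequence of holomorphic functions converges pointwise to a holomorphic
function along the hyperfilter of `ℕ`; no subsequence has to be extracted. -/
lemma exists_ultralimit {R : Set ℂ} (hR : IsOpen R) (F : ℕ → ℂ → ℂ)
    (hF : ∀ n, DifferentiableOn ℂ (F n) R)
    (hb : ∀ s ∈ R, ∃ ρ > 0, ∃ C : ℝ, Metric.ball s ρ ⊆ R ∧
      ∀ n, ∀ w ∈ Metric.ball s ρ, ‖F n w‖ ≤ C) :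
    ∃ G : ℂ → ℂ, DifferentiableOn ℂ G R ∧
      ∀ s ∈ R, Filter.Tendsto (fun n => F n s) (Filter.hyperfilter ℕ) (nhds (G s)) := by
  have hpt : ∀ s, ∃ a, s ∈ R →
      Filter.Tendsto (fun n => F n s) (Filter.hyperfilter ℕ) (nhds a) := by
    intro s
    by_cases hs : s ∈ R
    · obtain ⟨ρ, hρ, C, hsub, hC⟩ := hb s hs
      obtain ⟨a, -, ha⟩ := (isCompact_closedBall (0 : ℂ) C).ultrafilter_le_nhds'
        ((Filter.hyperfilter ℕ).map (fun n => F n s))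
        (show ∀ᶠ n in (Filter.hyperfilter ℕ : Filter ℕ), F n s ∈ Metric.closedBall (0 : ℂ) C from
          Filter.Eventually.of_forall fun n => by
            simpa using hC n s (Metric.mem_ball_self hρ))
      exact ⟨a, fun _ => ha⟩
    · exact ⟨0, fun h => absurd h hs⟩
  choose G hG using hpt
  refine ⟨G, ?_, fun s hs => hG s hs⟩
  refine TendstoLocallyUniformlyOn.differentiableOn (F := F)
    (φ := (Filter.hyperfilter ℕ : Filter ℕ)) ?_ (Filter.Eventually.of_forall hF) hR
  rw [Metric.tendstoLocallyUniformlyOn_iff]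
  intro ε hε s hs
  obtain ⟨ρ, hρ, C, hsub, hC⟩ := hb s hs
  have hC0 : 0 ≤ C := (norm_nonneg _).trans (hC 0 s (Metric.mem_ball_self hρ))
  set L := C / (ρ / 4) with hL
  have hL0 : 0 ≤ L := by positivity
  have hη : 0 < min (ρ / 2) (ε / (3 * (L + 1))) := by positivity
  refine ⟨Metric.ball s (min (ρ / 2) (ε / (3 * (L + 1)))),
    mem_nhdsWithin_of_mem_nhds (Metric.ball_mem_nhds s hη), ?_⟩
  filter_upwards [(hG s hs) (Metric.ball_mem_nhds (G s) (show 0 < ε / 3 by positivity))]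
    with n hn y hy
  have hy1 : y ∈ Metric.ball s (ρ / 2) := Metric.ball_subset_ball (min_le_left _ _) hy
  have hyR : y ∈ R := hsub (Metric.ball_subset_ball (by linarith) hy1)
  have hs1 : s ∈ Metric.ball s (ρ / 2) := Metric.mem_ball_self (by positivity)
  have hlip : ∀ k, ‖F k y - F k s‖ ≤ L * ‖y - s‖ := fun k =>
    norm_sub_le_of_ball_bound hρ ((hF k).mono hsub) (hC k) hy1 hs1
  have hlipG : ‖G y - G s‖ ≤ L * ‖y - s‖ :=
    le_of_tendsto ((hG y hyR).sub (hG s hs)).norm (Filter.Eventually.of_forall hlip)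
  have hsmall : L * ‖y - s‖ ≤ ε / 3 := by
    have h1 : ‖y - s‖ < ε / (3 * (L + 1)) := by
      rw [← dist_eq_norm]; exact lt_of_lt_of_le hy (min_le_right _ _)
    have h2 : (L + 1) * ‖y - s‖ < ε / 3 := by
      rw [lt_div_iff₀ (by positivity)] at h1 ⊢
      linarith
    nlinarith [norm_nonneg (y - s)]
  have hn' : ‖F n s - G s‖ < ε / 3 := by rw [← dist_eq_norm]; exact hn
  have key : G y - F n y = (G y - G s) - (F n s - G s) - (F n y - F n s) := by ring
  rw [dist_eq_norm, key]
  calc _ ≤ ‖(G y - G s) - (F n s - G s)‖ + ‖F n y - F n s‖ := norm_sub_le _ _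
    _ ≤ ‖G y - G s‖ + ‖F n s - G s‖ + ‖F n y - F n s‖ := by gcongr; exact norm_sub_le _ _
    _ < ε := by linarith [hlip n]

/-- On a convex domain, a nonvanishing holomorphic function has a holomorphic logarithm. -/
lemma exists_holomorphic_log {R : Set ℂ} (hR : IsOpen R) (hc : Convex ℝ R) {g : ℂ → ℂ}
    (hg : DifferentiableOn ℂ g R) (h0 : ∀ s ∈ R, g s ≠ 0) :
    ∃ L : ℂ → ℂ, DifferentiableOn ℂ L R ∧ ∀ s ∈ R, Complex.exp (L s) = g s := by
  rcases R.eq_empty_or_nonempty with rfl | ⟨s₀, hs₀⟩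
  · exact ⟨0, by simp, by simp⟩
  have hq : DifferentiableOn ℂ (fun s => deriv g s / g s) R := (hg.deriv hR).div hg h0
  obtain ⟨L, hL⟩ := hc.exists_forall_hasDerivWithinAt hq
  have hL' : ∀ s ∈ R, HasDerivAt L (deriv g s / g s) s := fun s hs =>
    (hL s hs).hasDerivAt (hR.mem_nhds hs)
  have hg' : ∀ s ∈ R, HasDerivAt g (deriv g s) s := fun s hs =>
    (hg.differentiableAt (hR.mem_nhds hs)).hasDerivAt
  -- `g · exp (-L)` has vanishing derivative, so it is a nonzero constant `exp a`.
  have hder : ∀ s ∈ R, HasDerivAt (fun s => g s * Complex.exp (-L s)) 0 s := by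
    intro s hs
    have hz : deriv g s * Complex.exp (-L s) +
        g s * (Complex.exp (-L s) * -(deriv g s / g s)) = 0 := by
      have := h0 s hs
      field_simp
      ring
    have h := (hg' s hs).mul (hL' s hs).neg.cexp
    simp only [Pi.neg_apply] at h
    rw [hz] at h
    exact h
  have hconst : ∀ s ∈ R, g s * Complex.exp (-L s) = g s₀ * Complex.exp (-L s₀) := by
    intro s hs
    exact hR.is_const_of_deriv_eq_zero hc.isPreconnected
      (fun s hs => (hder s hs).differentiableAt.differentiableWithinAt)
      (fun s hs => (hder s hs).deriv) hs hs₀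
  refine ⟨fun s => L s + Complex.log (g s₀ * Complex.exp (-L s₀)), ?_, ?_⟩
  · exact fun s hs => ((hL' s hs).differentiableAt.add_const _).differentiableWithinAt
  · intro s hs
    rw [Complex.exp_add, Complex.exp_log (mul_ne_zero (h0 s₀ hs₀) (Complex.exp_ne_zero _)),
      ← hconst s hs, Complex.exp_neg]
    field_simp

/-! ### A bounded holomorphic function that is small where `g` is large -/

/-- If `g` avoids a compact set `K` of positive Chebyshev capacity, then there is a bounded
holomorphic `G` whose modulus is comparable with `1 / |g|` where `|g|` is large. Informally
`|G| = exp (-U ∘ g)`, where `U` is the logarithmic potential of the equilibrium measure of `K`;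
here `G` is a limit of the roots `P (g s) ^ (-1 / deg P)` for Fekete polynomials `P` of `K`. -/
lemma exists_bounded_of_avoids {K : Set ℂ} (hK : IsCompact K) {c M : ℝ} (hc : 0 < c)
    (hM : K ⊆ Metric.closedBall 0 M)
    (hcap : ∀ n (a : Fin n → ℂ), (∀ i, a i ∈ K) → ∃ z ∈ K, c ^ n ≤ ∏ i, ‖z - a i‖)
    {R : Set ℂ} (hR : IsOpen R) (hconv : Convex ℝ R) {g : ℂ → ℂ}
    (hg : DifferentiableOn ℂ g R) (hgK : ∀ s ∈ R, g s ∉ K) :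
    ∃ G : ℂ → ℂ, DifferentiableOn ℂ G R ∧ ∀ s ∈ R, ‖G s‖ ≤ 1 / c ∧
      1 ≤ ‖G s‖ * (‖g s‖ + M) ∧ ‖G s‖ * (‖g s‖ - M) ≤ 1 := by
  have hKne : K.Nonempty := by
    obtain ⟨z, hz, -⟩ := hcap 0 (fun i => i.elim0) (fun i => i.elim0)
    exact ⟨z, hz⟩
  have hd : ∀ s ∈ R, 0 < Metric.infDist (g s) K := fun s hs =>
    (hK.isClosed.notMem_iff_infDist_pos hKne).1 (hgK s hs)
  choose a haK ha using exists_fekete hK hc hcap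
  have hL : ∀ n : ℕ, ∃ L : ℂ → ℂ, DifferentiableOn ℂ L R ∧
      ∀ s ∈ R, Complex.exp (L s) = ∏ i, (g s - a n i) := by
    intro n
    refine exists_holomorphic_log hR hconv (g := fun s => ∏ i, (g s - a n i)) ?_ ?_
    · exact DifferentiableOn.fun_finsetProd fun i _ => hg.sub_const _
    · intro s hs
      refine Finset.prod_ne_zero_iff.2 fun i _ h => hgK s hs ?_
      rw [sub_eq_zero.1 h]
      exact haK n i
  choose L hLd hL using hL
  set F : ℕ → ℂ → ℂ := fun n s => Complex.exp (-L n s / ((n + 1 : ℕ) : ℂ)) with hFdef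
  have hF : ∀ n, DifferentiableOn ℂ (F n) R := fun n => ((hLd n).neg.div_const _).cexp
  have hpow : ∀ n, ∀ s ∈ R, ‖F n s‖ ^ (n + 1) * ∏ i, ‖g s - a n i‖ = 1 := by
    intro n s hs
    have hN : ((n + 1 : ℕ) : ℂ) ≠ 0 := by exact_mod_cast Nat.succ_ne_zero n
    rw [← norm_pow, ← norm_prod, ← norm_mul, ← hL n s hs, hFdef, ← Complex.exp_nat_mul,
      ← Complex.exp_add, mul_div_cancel₀ _ hN]
    simp
  have hmain : ∀ n, ∀ s ∈ R,
      (‖F n s‖ * c) ^ (n + 1) ≤ ((n + 1 : ℕ) : ℝ) * (c / Metric.infDist (g s) K) := by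
    intro n s hs
    have h1 := hpow n s hs
    have h2 := ha n (g s)
    have h3 : 0 ≤ ‖F n s‖ ^ (n + 1) := by positivity
    have h4 := mul_le_mul_of_nonneg_left h2 h3
    have h5 : ‖F n s‖ ^ (n + 1) * (((n : ℝ) + 1) * ∏ i, ‖g s - a n i‖) = (n : ℝ) + 1 := by
      linear_combination ((n : ℝ) + 1) * h1
    rw [h5] at h4
    rw [mul_div_assoc', le_div_iff₀ (hd s hs), mul_pow]
    push_cast
    calc _ = c * (‖F n s‖ ^ (n + 1) * (Metric.infDist (g s) K * c ^ n)) := by ring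
      _ ≤ c * ((n : ℝ) + 1) := by gcongr
      _ = _ := by ring
  -- Bernoulli's inequality turns the previous bound into a bound independent of `n`.
  have hbern : ∀ n, ∀ s ∈ R, ‖F n s‖ * c ≤ 1 + c / Metric.infDist (g s) K := by
    intro n s hs
    have h0 : 0 ≤ ‖F n s‖ * c := by positivity
    have h1 := one_add_mul_le_pow (a := ‖F n s‖ * c - 1) (by linarith) (n + 1)
    rw [show 1 + (‖F n s‖ * c - 1) = ‖F n s‖ * c by ring] at h1
    have h2 := h1.trans (hmain n s hs)
    have h3 : (0 : ℝ) < ((n + 1 : ℕ) : ℝ) := by positivity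
    have h4 : ((n + 1 : ℕ) : ℝ) * (‖F n s‖ * c - 1) ≤
        ((n + 1 : ℕ) : ℝ) * (c / Metric.infDist (g s) K) := by linarith
    linarith [le_of_mul_le_mul_left h4 h3]
  obtain ⟨G, hGd, hG⟩ := exists_ultralimit hR F hF (by
    intro s hs
    have hcont : ContinuousAt (fun w => Metric.infDist (g w) K) s :=
      (Metric.continuous_infDist_pt K).continuousAt.comp
        (hg.differentiableAt (hR.mem_nhds hs)).continuousAt
    have hev := hcont.eventually (lt_mem_nhds (half_lt_self (hd s hs)))
    obtain ⟨ρ, hρ, hsub⟩ := Metric.mem_nhds_iff.1 (Filter.inter_mem (hR.mem_nhds hs) hev)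
    refine ⟨ρ, hρ, (1 + c / (Metric.infDist (g s) K / 2)) / c, fun w hw => (hsub hw).1, ?_⟩
    intro n w hw
    obtain ⟨hwR, hw2⟩ := hsub hw
    have hds := hd s hs
    have hw3 : Metric.infDist (g s) K / 2 < Metric.infDist (g w) K := hw2
    rw [le_div_iff₀ hc]
    refine (hbern n w hwR).trans ?_
    gcongr)
  refine ⟨G, hGd, fun s hs => ⟨?_, ?_, ?_⟩⟩
  · rw [le_div_iff₀ hc]
    refine le_of_forall_gt_imp_ge_of_dense fun q hq => ?_
    refine le_of_tendsto ((hG s hs).norm.mul_const c)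
      (Filter.Eventually.filter_mono Nat.hyperfilter_le_atTop ?_)
    have hlim := (tendsto_pow_const_div_const_pow_of_one_lt 1 hq).comp
      (Filter.tendsto_add_atTop_nat 1)
    have hX : 0 < c / Metric.infDist (g s) K := div_pos hc (hd s hs)
    filter_upwards [hlim.eventually (gt_mem_nhds (inv_pos.2 hX))] with n hn
    have hq0 : 0 < q := by linarith
    refine le_of_lt (lt_of_pow_lt_pow_left₀ (n + 1) hq0.le ((hmain n s hs).trans_lt ?_))
    simp only [Function.comp_apply, pow_one] at hn
    rw [div_lt_iff₀ (by positivity), inv_mul_eq_div, lt_div_iff₀ hX] at hn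
    exact hn
  · refine ge_of_tendsto ((hG s hs).norm.mul_const _) (Filter.Eventually.of_forall fun n => ?_)
    by_contra! hlt
    have hM0 : 0 ≤ ‖g s‖ + M := by
      obtain ⟨z, hz⟩ := hKne
      have := hM hz
      rw [mem_closedBall_zero_iff] at this
      linarith [norm_nonneg z, norm_nonneg (g s)]
    have h1 := pow_lt_one₀ (by positivity) hlt (Nat.succ_ne_zero n)
    have h2 : ∏ i, ‖g s - a n i‖ ≤ ∏ _i : Fin (n + 1), (‖g s‖ + M) := by
      refine Finset.prod_le_prod (fun i _ => norm_nonneg _) fun i _ => ?_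
      have := hM (haK n i)
      rw [mem_closedBall_zero_iff] at this
      linarith [norm_sub_le (g s) (a n i)]
    rw [Finset.prod_const, Finset.card_univ, Fintype.card_fin] at h2
    have h3 := mul_le_mul_of_nonneg_left h2 (show 0 ≤ ‖F n s‖ ^ (n + 1) by positivity)
    rw [hpow n s hs, ← mul_pow] at h3
    exact absurd h1 (not_lt.2 h3)
  · refine le_of_tendsto ((hG s hs).norm.mul_const _) (Filter.Eventually.of_forall fun n => ?_)
    by_contra! hlt
    have hM0 : 0 < ‖g s‖ - M := by
      by_contra! h
      nlinarith [norm_nonneg (F n s)]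
    have h1 := one_lt_pow₀ hlt (Nat.succ_ne_zero n)
    have h2 : ∏ _i : Fin (n + 1), (‖g s‖ - M) ≤ ∏ i, ‖g s - a n i‖ := by
      refine Finset.prod_le_prod (fun i _ => hM0.le) fun i _ => ?_
      have := hM (haK n i)
      rw [mem_closedBall_zero_iff] at this
      linarith [norm_sub_norm_le (g s) (a n i)]
    rw [Finset.prod_const, Finset.card_univ, Fintype.card_fin] at h2
    have h3 := mul_le_mul_of_nonneg_left h2 (show 0 ≤ ‖F n s‖ ^ (n + 1) by positivity)
    rw [hpow n s hs, ← mul_pow] at h3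
    exact absurd h1 (not_lt.2 h3)

/-! ### Boundary uniqueness on a half disc -/

/-- A two-constants estimate: if `F` is bounded by `A` on the left side of a square centred at `z`
(the side lies on the imaginary axis) and by `B` on the whole square, then `|F z| ^ 4 ≤ A * B ^ 3`.
The maximum principle is applied to the product of the four rotates of `F` about `z`. -/
lemma norm_pow_four_le {F : ℂ → ℂ} {z : ℂ} {A B : ℝ} (hx : 0 < z.re) (hF : Continuous F)
    (hd : ∀ w : ℂ, |w.re - z.re| < z.re → |w.im - z.im| < z.re → DifferentiableAt ℂ F w)
    (hA : ∀ y : ℝ, |y - z.im| ≤ z.re → ‖F (y * Complex.I)‖ ≤ A)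
    (hB : ∀ w : ℂ, |w.re - z.re| ≤ z.re → |w.im - z.im| ≤ z.re → ‖F w‖ ≤ B) :
    ‖F z‖ ^ 4 ≤ A * B ^ 3 := by
  set x := z.re with hxdef
  set U : Set ℂ := {w | |w.re| < x ∧ |w.im| < x} with hU
  have hUo : IsOpen U := by
    apply IsOpen.inter
    · exact isOpen_lt (Complex.continuous_re.abs) continuous_const
    · exact isOpen_lt (Complex.continuous_im.abs) continuous_const
  have hUcl : closure U ⊆ {w | |w.re| ≤ x ∧ |w.im| ≤ x} := by
    refine closure_minimal (fun w hw => ⟨hw.1.le, hw.2.le⟩) ?_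
    apply IsClosed.inter
    · exact isClosed_le (Complex.continuous_re.abs) continuous_const
    · exact isClosed_le (Complex.continuous_im.abs) continuous_const
  have hUb : Bornology.IsBounded U := by
    refine (Metric.isBounded_ball (x := (0 : ℂ)) (r := 2 * x)).subset fun w hw => ?_
    rw [mem_ball_zero_iff]
    have := Complex.norm_le_abs_re_add_abs_im w
    linarith [hw.1, hw.2]
  have hB0 : 0 ≤ B := (norm_nonneg _).trans
    (hB z (by simpa [hxdef] using hx.le) (by simpa using hx.le))
  have hA0 : 0 ≤ A := (norm_nonneg _).trans (hA z.im (by simp [hx.le]))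
  set P : ℂ → ℂ := fun w => F (z + w) * F (z + Complex.I * w) * F (z - w) *
    F (z - Complex.I * w) with hP
  have hPd : DiffContOnCl ℂ P U := by
    refine ⟨fun w hw => DifferentiableAt.differentiableWithinAt ?_, ?_⟩
    · have h1 : DifferentiableAt ℂ (fun w => F (z + w)) w :=
        (hd (z + w) (by simpa [hxdef] using hw.1) (by simpa [hxdef] using hw.2)).comp w
          (by fun_prop)
      have h2 : DifferentiableAt ℂ (fun w => F (z + Complex.I * w)) w :=
        (hd (z + Complex.I * w) (by simpa [hxdef] using hw.2) (by simpa [hxdef] using hw.1)).comp w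
          (by fun_prop)
      have h3 : DifferentiableAt ℂ (fun w => F (z - w)) w :=
        (hd (z - w) (by simpa [hxdef] using hw.1) (by simpa [hxdef] using hw.2)).comp w
          (by fun_prop)
      have h4 : DifferentiableAt ℂ (fun w => F (z - Complex.I * w)) w :=
        (hd (z - Complex.I * w) (by simpa [hxdef] using hw.2) (by simpa [hxdef] using hw.1)).comp w
          (by fun_prop)
      exact ((h1.mul h2).mul h3).mul h4
    · exact Continuous.continuousOn (by fun_prop)
  have hle := Complex.norm_le_of_forall_mem_frontier_norm_le hUb hPd (C := A * B ^ 3)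
    (fun w hw => by
      have hwc := hUcl (frontier_subset_closure hw)
      have hwU : w ∉ U := by
        rw [hUo.frontier_eq] at hw
        exact hw.2
      have hwre := hwc.1
      have hwim := hwc.2
      have hb1 : ‖F (z + w)‖ ≤ B := hB _ (by simpa [hxdef] using hwre) (by simpa [hxdef] using hwim)
      have hb2 : ‖F (z + Complex.I * w)‖ ≤ B :=
        hB _ (by simpa [hxdef] using hwim) (by simpa [hxdef] using hwre)
      have hb3 : ‖F (z - w)‖ ≤ B := hB _ (by simpa [hxdef] using hwre) (by simpa [hxdef] using hwim)
      have hb4 : ‖F (z - Complex.I * w)‖ ≤ B :=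
        hB _ (by simpa [hxdef] using hwim) (by simpa [hxdef] using hwre)
      -- a point of the square with vanishing real part lies on its left side
      have hleft : ∀ v : ℂ, v.re = 0 → |v.im - z.im| ≤ x → ‖F v‖ ≤ A := by
        intro v hv hv2
        have : v = (v.im : ℂ) * Complex.I := by
          apply Complex.ext <;> simp [hv]
        rw [this]
        exact hA _ hv2
      have hcase : |w.re| = x ∨ |w.im| = x := by
        by_contra! h
        exact hwU ⟨lt_of_le_of_ne hwre h.1, lt_of_le_of_ne hwim h.2⟩
      simp only [hP, norm_mul]
      rcases hcase with h | h <;> rcases (abs_eq hx.le).1 h with h | h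
      · have := hleft (z - w) (by simp [h, hxdef]) (by simpa [hxdef] using hwim)
        calc _ ≤ B * B * A * B := by gcongr
          _ = _ := by ring
      · have := hleft (z + w) (by simp [h, hxdef]) (by simpa [hxdef] using hwim)
        calc _ ≤ A * B * B * B := by gcongr
          _ = _ := by ring
      · have := hleft (z + Complex.I * w) (by simp [h, hxdef]) (by simpa [hxdef] using hwre)
        calc _ ≤ B * A * B * B := by gcongr
          _ = _ := by ring
      · have := hleft (z - Complex.I * w) (by simp [h, hxdef]) (by simpa [hxdef] using hwre)
        calc _ ≤ B * B * B * A := by gcongr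
          _ = _ := by ring)
    (z := 0) (subset_closure ⟨by simpa using hx, by simpa using hx⟩)
  calc ‖F z‖ ^ 4 = ‖P 0‖ := by simp [hP]; ring
    _ ≤ _ := hle

/-- The right half of the disc of radius `ρ` about the origin. -/
def halfDisc (ρ : ℝ) : Set ℂ := {s | 0 < s.re} ∩ Metric.ball 0 ρ

lemma isOpen_halfDisc (ρ : ℝ) : IsOpen (halfDisc ρ) :=
  (isOpen_lt continuous_const Complex.continuous_re).inter Metric.isOpen_ball

lemma convex_halfDisc (ρ : ℝ) : Convex ℝ (halfDisc ρ) :=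
  (convex_halfSpace_re_gt 0).inter (convex_ball _ _)

lemma mem_halfDisc {ρ : ℝ} {s : ℂ} (h1 : 0 < s.re) (h2 : |s.re| + |s.im| < ρ) :
    s ∈ halfDisc ρ :=
  ⟨h1, by rw [mem_ball_zero_iff]; exact (Complex.norm_le_abs_re_add_abs_im s).trans_lt h2⟩

/-- If the boundary function of a Lipschitz primitive `H` of `G` is differentiable at `i y₀`, then
`G` has a limit along the horizontal ray ending there, determined by that derivative. As `G` takes
arbitrarily small values on this ray near its end, the derivative vanishes. -/
lemma deriv_boundary_eq_zero {H G : ℂ → ℂ} {ρ : ℝ} {Λ : NNReal} (hH : LipschitzWith Λ H)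
    (hHG : ∀ s ∈ halfDisc ρ, HasDerivAt H (G s) s) {y₀ : ℝ} (hy₀ : |y₀| < ρ) {β : ℂ}
    (hβ : HasDerivAt (fun y : ℝ => H (y * Complex.I)) β y₀)
    (hsmall : ∀ ε > 0, ∀ x₀ > 0, ∃ x : ℝ, 0 < x ∧ x < x₀ ∧ ‖G (x + y₀ * Complex.I)‖ < ε) :
    β = 0 := by
  -- `α` is the value of `G` predicted by `β = i α`
  set α : ℂ := -Complex.I * β with hα
  have hβα : β = Complex.I * α := by
    rw [hα, ← mul_assoc, mul_neg, Complex.I_mul_I]; simp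
  set Λ' : ℝ := Λ + ‖α‖ with hΛ'
  have hΛ0 : 0 ≤ Λ' := by positivity
  have key : ∀ ε > 0, ‖α‖ ≤ 2 * ε := by
    intro ε hε
    set η : ℝ := ε ^ 4 / (4000 * (Λ' ^ 3 + 1)) with hη
    have hη0 : 0 < η := by positivity
    have hlin := (hasDerivAt_iff_isLittleO.1 hβ).def hη0
    obtain ⟨d, hd, hball⟩ := Metric.eventually_nhds_iff.1 hlin
    obtain ⟨x, hx, hxlt, hGx⟩ := hsmall ε hε (min (d / 3) ((ρ - |y₀|) / 6))
      (lt_min (by positivity) (by linarith))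
    have hxd : 2 * x < d := by linarith [min_le_left (d / 3) ((ρ - |y₀|) / 6)]
    have hxρ : |y₀| + 6 * x < ρ := by linarith [min_le_right (d / 3) ((ρ - |y₀|) / 6)]
    set F : ℂ → ℂ := fun z => H z - H (y₀ * Complex.I) - α * (z - y₀ * Complex.I) with hF
    have hFc : Continuous F := by
      have := hH.continuous
      fun_prop
    have hFd : ∀ s ∈ halfDisc ρ, HasDerivAt F (G s - α) s := by
      intro s hs
      have := ((hHG s hs).sub_const (H (y₀ * Complex.I))).sub
        (((hasDerivAt_id s).sub_const (y₀ * Complex.I)).const_mul α)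
      rw [mul_one] at this
      exact this
    have hFB : ∀ w, ‖F w‖ ≤ Λ' * ‖w - y₀ * Complex.I‖ := by
      intro w
      calc ‖F w‖ ≤ ‖H w - H (y₀ * Complex.I)‖ + ‖α * (w - y₀ * Complex.I)‖ := norm_sub_le _ _
        _ ≤ Λ * ‖w - y₀ * Complex.I‖ + ‖α‖ * ‖w - y₀ * Complex.I‖ := by
            rw [norm_mul]
            gcongr
            rw [← dist_eq_norm, ← dist_eq_norm]
            exact hH.dist_le_mul _ _
        _ = _ := by rw [hΛ']; ring
    set p : ℂ := x + y₀ * Complex.I with hp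
    have hpre : p.re = x := by simp [hp]
    have hpim : p.im = y₀ := by simp [hp]
    have hsq : ∀ z ∈ Metric.closedBall p (x / 2), ‖F z‖ ≤ ε * x / 2 := by
      intro z hz
      rw [mem_closedBall_iff_norm] at hz
      have hre := (Complex.abs_re_le_norm (z - p)).trans hz
      have him := (Complex.abs_im_le_norm (z - p)).trans hz
      rw [Complex.sub_re, hpre, abs_le] at hre
      rw [Complex.sub_im, hpim, abs_le] at him
      have hzre : 0 < z.re := by linarith
      have h4 : ‖F z‖ ^ 4 ≤ (η * (2 * x)) * (Λ' * (5 * x)) ^ 3 := by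
        refine norm_pow_four_le hzre hFc ?_ ?_ ?_
        · intro w hw1 hw2
          rw [abs_lt] at hw1 hw2
          refine (hFd w (mem_halfDisc (by linarith) ?_)).differentiableAt
          have e1 : |w.re| ≤ 3 * x := by rw [abs_le]; constructor <;> linarith
          have e2 : |w.im| ≤ |y₀| + 2 * x := by
            rw [abs_le]; constructor <;> linarith [le_abs_self y₀, neg_abs_le y₀]
          linarith
        · intro y hy
          rw [abs_le] at hy
          have hyy : |y - y₀| ≤ 2 * x := by rw [abs_le]; constructor <;> linarith
          have := hball (y := y) (by rw [Real.dist_eq]; linarith)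
          have e : F (y * Complex.I) =
              H (y * Complex.I) - H (y₀ * Complex.I) - (y - y₀) • β := by
            simp only [hF, hβα, Complex.real_smul]
            push_cast
            ring
          rw [e]
          refine this.trans ?_
          rw [Real.norm_eq_abs]
          gcongr
        · intro w hw1 hw2
          rw [abs_le] at hw1 hw2
          refine (hFB w).trans ?_
          gcongr
          refine (Complex.norm_le_abs_re_add_abs_im _).trans ?_
          have e1 : |(w - y₀ * Complex.I).re| ≤ 3 * x := by
            rw [abs_le]; constructor <;> simp <;> linarith
          have e2 : |(w - y₀ * Complex.I).im| ≤ 2 * x := by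
            rw [abs_le]; constructor <;> simp <;> linarith
          linarith
      have h5 : (η * (2 * x)) * (Λ' * (5 * x)) ^ 3 ≤ (ε * x / 2) ^ 4 := by
        have e1 : η * (Λ' ^ 3 + 1) = ε ^ 4 / 4000 := by
          rw [hη]; field_simp
        have e2 : (η * (2 * x)) * (Λ' * (5 * x)) ^ 3 =
            250 * x ^ 4 * (η * (Λ' ^ 3 + 1)) - 250 * x ^ 4 * η := by ring
        rw [e2, e1]
        have : 0 ≤ 250 * x ^ 4 * η := by positivity
        nlinarith
      exact le_of_pow_le_pow_left₀ (by norm_num) (by positivity) (h4.trans h5)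
    have hsub : ∀ w ∈ Metric.closedBall p (x / 2), w ∈ halfDisc ρ := by
      intro z hz
      rw [mem_closedBall_iff_norm] at hz
      have hre := (Complex.abs_re_le_norm (z - p)).trans hz
      have him := (Complex.abs_im_le_norm (z - p)).trans hz
      rw [Complex.sub_re, hpre, abs_le] at hre
      rw [Complex.sub_im, hpim, abs_le] at him
      refine mem_halfDisc (by linarith) ?_
      have e1 : |z.re| ≤ 3 * x := by rw [abs_le]; constructor <;> linarith
      have e2 : |z.im| ≤ |y₀| + 2 * x := by
        rw [abs_le]; constructor <;> linarith [le_abs_self y₀, neg_abs_le y₀]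
      linarith
    have hcauchy := Complex.norm_deriv_le_of_forall_mem_sphere_norm_le (f := F) (c := p)
      (R := x / 2) (C := ε * x / 2) (by positivity)
      (DifferentiableOn.diffContOnCl_ball (U := Metric.closedBall p (x / 2))
        (fun w hw => (hFd w (hsub w hw)).differentiableAt.differentiableWithinAt) le_rfl)
      (fun z hz => hsq z (Metric.sphere_subset_closedBall hz))
    rw [(hFd p (hsub p (Metric.mem_closedBall_self (by positivity)))).deriv] at hcauchy
    have e : ε * x / 2 / (x / 2) = ε := by field_simp
    rw [e] at hcauchy
    have := norm_sub_norm_le α (G p)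
    rw [norm_sub_rev] at this
    linarith
  have hα0 : ‖α‖ = 0 := by
    refine le_antisymm (le_of_forall_pos_le_add fun ε hε => ?_) (norm_nonneg _)
    linarith [key (ε / 2) (by positivity)]
  rw [hβα, norm_eq_zero.1 hα0, mul_zero]

/-- A local uniqueness theorem of Privalov type: a bounded holomorphic function on a half disc whose
modulus has lower limit zero along the horizontal rays ending at almost every point of the diameter
has a zero (in fact it vanishes identically). -/
lemma exists_zero_of_radial {G : ℂ → ℂ} {ρ C : ℝ} (hρ : 0 < ρ)
    (hG : DifferentiableOn ℂ G (halfDisc ρ)) (hC : ∀ s ∈ halfDisc ρ, ‖G s‖ ≤ C)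
    (hsmall : ∀ᵐ y : ℝ, |y| < ρ → ∀ ε > 0, ∀ x₀ > 0,
      ∃ x : ℝ, 0 < x ∧ x < x₀ ∧ ‖G (x + y * Complex.I)‖ < ε) :
    ∃ s ∈ halfDisc ρ, G s = 0 := by
  obtain ⟨H₀, hH₀⟩ := (convex_halfDisc ρ).exists_forall_hasDerivWithinAt hG
  have hlip : LipschitzOnWith C.toNNReal H₀ (halfDisc ρ) :=
    (convex_halfDisc ρ).lipschitzOnWith_of_nnnorm_hasDerivWithin_le hH₀ fun s hs => by
      rw [← NNReal.coe_le_coe, coe_nnnorm]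
      exact (hC s hs).trans (Real.le_coe_toNNReal C)
  obtain ⟨H, hH, hEq⟩ := hlip.extend_finite_dimension
  have hHG : ∀ s ∈ halfDisc ρ, HasDerivAt H (G s) s := by
    intro s hs
    have hn := (isOpen_halfDisc ρ).mem_nhds hs
    refine ((hH₀ s hs).hasDerivAt hn).congr_of_eventuallyEq ?_
    filter_upwards [hn] with w hw using (hEq hw).symm
  have hI : LipschitzWith 1 (fun y : ℝ => (y : ℂ) * Complex.I) := by
    refine LipschitzWith.of_dist_le_mul fun a b => ?_
    rw [dist_eq_norm, dist_eq_norm, ← sub_mul, norm_mul, ← Complex.ofReal_sub,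
      Complex.norm_real]
    simp
  have hh := hH.comp hI
  have hzero : ∀ᵐ y : ℝ, y ∈ Set.uIcc (-(ρ / 2)) (ρ / 2) →
      HasDerivAt (H ∘ fun y : ℝ => (y : ℂ) * Complex.I) 0 y := by
    filter_upwards [hh.ae_differentiableAt (μ := volume), hsmall] with y hy hs hmem
    rw [Set.uIcc_of_le (by linarith)] at hmem
    have hyρ : |y| < ρ := by rw [abs_lt]; constructor <;> linarith [hmem.1, hmem.2]
    have hd := hy.hasDerivAt
    rwa [deriv_boundary_eq_zero hH hHG hyρ hd (hs hyρ)] at hd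
  obtain ⟨a, ha⟩ := (hh.lipschitzOnWith (s := Set.uIcc (-(ρ / 2)) (ρ / 2))
    ).absolutelyContinuousOnInterval.const_of_ae_hasDerivAt_zero hzero
  rw [Set.uIcc_of_le (by linarith)] at ha
  -- `H` has the constant boundary value `a`, so `H - a` vanishes on the left side of each
  -- relevant square centred near `ρ / 8`
  have hconst : ∀ z ∈ Metric.ball ((ρ / 8 : ℝ) : ℂ) (ρ / 16), H z = a := by
    intro z hz
    rw [mem_ball_iff_norm] at hz
    have hre := (Complex.abs_re_le_norm _).trans_lt hz
    have him := (Complex.abs_im_le_norm _).trans_lt hz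
    rw [Complex.sub_re, Complex.ofReal_re, abs_lt] at hre
    rw [Complex.sub_im, Complex.ofReal_im, abs_lt] at him
    have hcont : Continuous fun w => H w - a := hH.continuous.sub continuous_const
    obtain ⟨B, hB⟩ := (isCompact_closedBall z (2 * z.re)).exists_bound_of_continuousOn
      hcont.continuousOn
    have h4 := norm_pow_four_le (F := fun w => H w - a) (z := z) (A := 0) (B := B) (by linarith)
      hcont ?_ ?_ ?_
    · rw [zero_mul] at h4
      have := pow_eq_zero_iff (n := 4) (by norm_num) |>.1 (le_antisymm h4 (by positivity))
      exact sub_eq_zero.1 (norm_eq_zero.1 this)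
    · intro w hw1 hw2
      rw [abs_lt] at hw1 hw2
      refine ((hHG w (mem_halfDisc (by linarith) ?_)).differentiableAt).sub_const _
      have e1 : |w.re| ≤ 3 * ρ / 8 := by rw [abs_le]; constructor <;> linarith
      have e2 : |w.im| ≤ ρ / 4 := by rw [abs_le]; constructor <;> linarith
      linarith
    · intro y hy
      rw [abs_le] at hy
      have := ha y ⟨by linarith, by linarith⟩
      simp only [Function.comp_apply] at this
      simp [this]
    · intro w hw1 hw2
      refine hB w ?_
      rw [mem_closedBall_iff_norm]
      refine (Complex.norm_le_abs_re_add_abs_im _).trans ?_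
      rw [Complex.sub_re, Complex.sub_im]
      linarith
  have hmem : ((ρ / 8 : ℝ) : ℂ) ∈ halfDisc ρ := by
    refine mem_halfDisc (by simp; linarith) ?_
    rw [Complex.ofReal_re, Complex.ofReal_im, abs_of_pos (by linarith)]
    simp
    linarith
  refine ⟨_, hmem, (hHG _ hmem).unique ?_⟩
  refine (hasDerivAt_const _ a).congr_of_eventuallyEq ?_
  filter_upwards [Metric.ball_mem_nhds ((ρ / 8 : ℝ) : ℂ) (show 0 < ρ / 16 by linarith)] with w hw
    using hconst w hw

/-! ### Transfer from the circle to a half disc -/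

/-- A Haar-almost everywhere property on the circle holds along `y ↦ ζ e^{-iy}` for Lebesgue almost
every `y`. By Fubini this holds from some starting point `w` in place of `ζ`, and then from `ζ`
by a translation of `ℝ`. -/
lemma ae_real_of_ae_circle (m : Measure Circle) [m.IsHaarMeasure] {Q : Circle → Prop}
    (hQ : ∀ᵐ w ∂m, Q w) (ζ : Circle) : ∀ᵐ y : ℝ, Q (Circle.exp (-y) * ζ) := by
  obtain ⟨T, hST, hT, hT0⟩ := exists_measurable_superset_of_null (ae_iff.1 hQ)
  have hcont : Continuous fun p : ℝ × Circle => Circle.exp (-p.1) * p.2 := by fun_prop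
  have hmeas : MeasurableSet {p : ℝ × Circle | Circle.exp (-p.1) * p.2 ∈ T} :=
    hcont.measurable hT
  have hprod : (volume.prod m) {p : ℝ × Circle | Circle.exp (-p.1) * p.2 ∈ T} = 0 := by
    rw [Measure.measure_prod_null hmeas]
    refine Filter.Eventually.of_forall fun y => ?_
    have := measure_preimage_mul m (Circle.exp (-y)) T
    rw [hT0] at this
    exact this
  have hprod' : ∀ᵐ p ∂(m.prod (volume : Measure ℝ)), Circle.exp (-p.2) * p.1 ∉ T := by
    have h1 : ∀ᵐ p ∂(volume : Measure ℝ).prod m, Circle.exp (-p.1) * p.2 ∉ T := by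
      rw [ae_iff]; simpa using hprod
    exact (Measure.measurePreserving_swap (μ := m) (ν := (volume : Measure ℝ))
      ).quasiMeasurePreserving.ae h1
  obtain ⟨w, hw⟩ := (Measure.ae_ae_of_ae_prod hprod').exists
  set t : ℝ := (w * ζ⁻¹ : Circle).val.arg with ht
  have hwt : w = Circle.exp t * ζ := by
    rw [ht, Circle.exp_arg]; simp
  have h2 := (measurePreserving_add_left (volume : Measure ℝ) t).quasiMeasurePreserving.ae hw
  filter_upwards [h2] with y hy
  by_contra hn
  apply hy
  have e : Circle.exp (-(t + y)) * w = Circle.exp (-y) * ζ := by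
    rw [hwt, ← mul_assoc, ← Circle.exp_add]
    congr 2
    ring
  rw [e]
  exact hST hn

/-- Since `f` is bounded on compact subdiscs, unboundedness of a radial image is witnessed
arbitrarily close to the circle. -/
lemma exists_large_near_circle {f : ℂ → ℂ} (hf : DifferentiableOn ℂ f (Metric.ball (0 : ℂ) 1))
    {w : ℂ} (hw : ‖w‖ = 1)
    (hunb : ¬ Bornology.IsBounded {v : ℂ | ∃ s : ℝ, 0 ≤ s ∧ s < 1 ∧ v = f ((s : ℂ) * w)})
    (N : ℝ) {x₀ : ℝ} (hx₀ : 0 < x₀) :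
    ∃ x : ℝ, 0 < x ∧ x < x₀ ∧ N < ‖f ((Real.exp (-x) : ℝ) * w)‖ := by
  by_contra! hcon
  apply hunb
  have hsub : Metric.closedBall (0 : ℂ) (Real.exp (-x₀)) ⊆ Metric.ball 0 1 :=
    Metric.closedBall_subset_ball (by rw [Real.exp_lt_one_iff]; linarith)
  obtain ⟨B, hB⟩ := (isCompact_closedBall (0 : ℂ) (Real.exp (-x₀))).exists_bound_of_continuousOn
    (hf.continuousOn.mono hsub)
  refine (Metric.isBounded_closedBall (x := (0 : ℂ)) (r := max B N)).subset ?_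
  rintro v ⟨s, hs0, hs1, rfl⟩
  rw [mem_closedBall_zero_iff, le_max_iff]
  rcases le_or_gt s (Real.exp (-x₀)) with h | h
  · left
    refine hB _ ?_
    rw [mem_closedBall_zero_iff, norm_mul, hw, mul_one, Complex.norm_real, Real.norm_eq_abs,
      abs_of_nonneg hs0]
    exact h
  · right
    have hs : 0 < s := (Real.exp_pos _).trans h
    have := hcon (-Real.log s) (by linarith [Real.log_neg hs hs1])
      (by linarith [(Real.lt_log_iff_exp_lt hs).2 h])
    rwa [neg_neg, Real.exp_log hs] at this

/-! ### Conclusion -/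

/-- If `f` is holomorphic on the unit disc and has unbounded radial image at almost every
boundary point, then for every `ζ ∈ 𝕋` and `r > 0` the complement of `f(D_{ζ,r})` is polar,
where `D_{ζ,r} = {z ∈ 𝔻 : |z - ζ| < r}`. -/
theorem stmt17 (m : Measure Circle) [m.IsHaarMeasure]
    (f : ℂ → ℂ) (hf : DifferentiableOn ℂ f (Metric.ball (0 : ℂ) 1))
    (hunb : ∀ᵐ (w : Circle) ∂m, ¬ Bornology.IsBounded
      {v : ℂ | ∃ s : ℝ, 0 ≤ s ∧ s < 1 ∧ v = f ((s : ℂ) * (w : ℂ))}) :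
    ∀ ζ ∈ Metric.sphere (0 : ℂ) 1, ∀ r : ℝ, 0 < r →
      IsPolar (f '' (Metric.ball (0 : ℂ) 1 ∩ Metric.ball ζ r))ᶜ := by
  intro ζ hζ r hr
  obtain ⟨u, hu⟩ : ∃ u : Circle, (u : ℂ) = ζ := ⟨⟨ζ, hζ⟩, rfl⟩
  have hζ1 : ‖ζ‖ = 1 := by simpa using hζ
  set D : Set ℂ := Metric.ball (0 : ℂ) 1 ∩ Metric.ball ζ r with hD
  have hDo : IsOpen D := Metric.isOpen_ball.inter Metric.isOpen_ball
  -- the points `ζ e^{-s}` with `s` in a small half disc lie in `D`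
  obtain ⟨ρ, hρ, hmap⟩ : ∃ ρ > 0, ∀ s ∈ halfDisc ρ, ζ * Complex.exp (-s) ∈ D := by
    have hc : ContinuousAt (fun s : ℂ => ζ * Complex.exp (-s)) 0 := by fun_prop
    have hev := hc.eventually (Metric.ball_mem_nhds _ hr)
    obtain ⟨ρ, hρ, hball⟩ := Metric.eventually_nhds_iff_ball.1 hev
    refine ⟨ρ, hρ, fun s hs => ⟨?_, ?_⟩⟩
    · rw [mem_ball_zero_iff, norm_mul, hζ1, one_mul, Complex.norm_exp, Real.exp_lt_one_iff]
      have := hs.1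
      simpa using this
    · simpa using hball s hs.2
  have hg : DifferentiableOn ℂ (fun s => f (ζ * Complex.exp (-s))) (halfDisc ρ) :=
    hf.comp (Differentiable.differentiableOn (by fun_prop)) fun s hs => (hmap s hs).1
  have hopen : IsOpen (f '' D) := by
    rcases (hf.analyticOnNhd Metric.isOpen_ball).is_constant_or_isOpen
      (convex_ball (0 : ℂ) 1).isPreconnected with ⟨a, ha⟩ | h
    · exfalso
      obtain ⟨w, hw⟩ := hunb.exists
      refine hw (Bornology.isBounded_singleton (x := a) |>.subset ?_)
      rintro v ⟨s, hs0, hs1, rfl⟩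
      refine ha _ ?_
      rw [mem_ball_zero_iff, norm_mul, Circle.norm_coe, mul_one, Complex.norm_real,
        Real.norm_eq_abs, abs_of_nonneg hs0]
      exact hs1
    · exact h D Set.inter_subset_left hDo
  have hpt : ((ρ / 2 : ℝ) : ℂ) ∈ halfDisc ρ := by
    refine mem_halfDisc (by simp; linarith) ?_
    rw [Complex.ofReal_re, Complex.ofReal_im, abs_of_pos (by linarith)]
    simp
    linarith
  obtain ⟨δ, hδ, hδball⟩ := Metric.isOpen_iff.1 hopen _ (Set.mem_image_of_mem f (hmap _ hpt))
  refine isPolar_of_chebyshev_zero hδ (z₀ := f (ζ * Complex.exp (-((ρ / 2 : ℝ) : ℂ)))) ?_ ?_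
  · intro z hz
    by_contra! h
    refine hz (hδball ?_)
    rwa [mem_ball_iff_norm, norm_sub_rev]
  intro k _ c hc
  by_contra! hcap
  have hK : IsCompact ((f '' D)ᶜ ∩ Metric.closedBall 0 (k : ℝ)) :=
    (isCompact_closedBall _ _).inter_left hopen.isClosed_compl
  obtain ⟨G, hGd, hG⟩ := exists_bounded_of_avoids hK hc Set.inter_subset_right hcap
    (isOpen_halfDisc ρ) (convex_halfDisc ρ) hg
    (fun s hs hs' => hs'.1 (Set.mem_image_of_mem f (hmap s hs)))
  have hsmall : ∀ᵐ y : ℝ, |y| < ρ → ∀ ε > 0, ∀ x₀ > 0,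
      ∃ x : ℝ, 0 < x ∧ x < x₀ ∧ ‖G (x + y * Complex.I)‖ < ε := by
    filter_upwards [ae_real_of_ae_circle m hunb u] with y hy hyρ ε hε x₀ hx₀
    obtain ⟨x, hx, hxlt, hlarge⟩ := exists_large_near_circle hf (Circle.norm_coe _) hy
      (k + 2 / ε) (lt_min hx₀ (sub_pos.2 hyρ))
    refine ⟨x, hx, hxlt.trans_le (min_le_left _ _), ?_⟩
    have hxρ := hxlt.trans_le (min_le_right _ _)
    have hs : (x + y * Complex.I : ℂ) ∈ halfDisc ρ := by
      refine mem_halfDisc (by simpa using hx) ?_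
      simp only [Complex.add_re, Complex.add_im, Complex.ofReal_re, Complex.ofReal_im,
        Complex.re_ofReal_mul, Complex.im_ofReal_mul, Complex.I_re, Complex.I_im]
      rw [mul_zero, mul_one, add_zero, zero_add, abs_of_pos hx]
      linarith
    have e : ((Real.exp (-x) : ℝ) : ℂ) * ((Circle.exp (-y) * u : Circle) : ℂ) =
        ζ * Complex.exp (-(x + y * Complex.I)) := by
      rw [Circle.coe_mul, Circle.coe_exp, hu, neg_add, Complex.exp_add]
      push_cast
      rw [neg_mul]
      ring
    rw [e] at hlarge
    have h3 := (hG _ hs).2.2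
    have h4 : ‖G (x + y * Complex.I)‖ * (2 / ε) ≤ 1 := by
      refine le_trans ?_ h3
      gcongr
      linarith
    rw [mul_div_assoc', div_le_one hε] at h4
    linarith
  obtain ⟨s, hs, hs0⟩ := exists_zero_of_radial hρ hGd (fun s hs => (hG s hs).1) hsmall
  have := (hG s hs).2.1
  rw [hs0, norm_zero, zero_mul] at this
  linarith
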